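/- For m, n ≥ 3, the 'pushed' digraph P(C⃗_m □ C⃗_n), obtained from C⃗_m □ C⃗_n by reversing all four edges incident to a chosen vertex v, is hamiltonian if and only if the vertex-deleted digraph (C⃗_m □ C⃗_n) ∖ R_{2,2} is hamiltonian. -/

import Mathlib

/-- Edge relation of the Cartesian product `C⃗_m □ C⃗_n` on `ZMod m × ZMod n`. -/
def cpEdge (m n : ℕ) (u v : ZMod m × ZMod n) : Prop :=
  v = u + (1, 0) ∨ v = u + (0, 1)

/-- Edge relation of the digraph obtained by pushing at the vertex `v₀`:
every edge incident with `v₀` is reversed. -/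
def pushedEdge (m n : ℕ) (v₀ u v : ZMod m × ZMod n) : Prop :=
  (cpEdge m n u v ∧ u ≠ v₀ ∧ v ≠ v₀) ∨ (cpEdge m n v u ∧ (u = v₀ ∨ v = v₀))

/-- The rectangle `R_{2,2} = {0,1} × {0,1}`. -/
def R22 (m n : ℕ) : Set (ZMod m × ZMod n) :=
  {v | (v.1 = 0 ∨ v.1 = 1) ∧ (v.2 = 0 ∨ v.2 = 1)}

/-- `E` has a hamiltonian cycle on the vertex set `S`, of length `N`:
a cyclic sequence of `N` distinct vertices covering `S`, following edges of `E`. -/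
def HamOn {V : Type} (E : V → V → Prop) (S : Set V) (N : ℕ) : Prop :=
  ∃ f : ZMod N → V, Function.Injective f ∧ Set.range f = S ∧ ∀ i, E (f i) (f (i + 1))

/-!
Everything takes place in the Cayley digraph of an abelian group with two generators `a` (pointing
right) and `b` (pointing up), inside the `3 × 3` window with lower left corner `c`. Push at the
centre `v = c + a + b` of the window. A hamiltonian cycle leaves `v` through `c + a`, below it, or
through `c + b`, on its left, and the two cases are exchanged by swapping `a` and `b`. In the first
case it must continue `c + a → c + 2a → c + 2a + b`. Returning to `v` from there would close a
`4`-cycle, so the cycle enters `v` from `c + a + 2b`, and the part before `v` is forced to be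
`c → c + b → c + 2b → c + a + 2b → v`. Removing the last four vertices, which form the square at
`c + b`, leaves a hamiltonian path of the remaining vertices from `c + a` to `c`, which the edge
`c → c + a` closes up. Conversely, every hamiltonian cycle avoiding that square uses this edge, and
so arises in this way. Translations finally carry the square at `c + b` to any other one.
-/

section Digraph

variable {V : Type}

/-- The digraph obtained from `E` by pushing at `v₀`: all edges at `v₀` are reversed. -/
def pushAt (E : V → V → Prop) (v₀ u v : V) : Prop :=
  (E u v ∧ u ≠ v₀ ∧ v ≠ v₀) ∨ (E v u ∧ (u = v₀ ∨ v = v₀))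

/-- The vertex-deleted digraph `E ∖ S`, on the same vertex type, where the vertices of `S` become
isolated. -/
def deleteVerts (E : V → V → Prop) (S : Set V) (u v : V) : Prop :=
  E u v ∧ u ∉ S ∧ v ∉ S

/-- The cyclic sequence `f` is a hamiltonian cycle of `E` on the vertex set `S`. This is the body of
`HamOn`. -/
structure IsHamCycle {N : ℕ} (E : V → V → Prop) (S : Set V) (f : ZMod N → V) : Prop where
  injective : Function.Injective f
  range_eq : Set.range f = S
  edge : ∀ i, E (f i) (f (i + 1))

/-- The list `l` is a hamiltonian path of `E` on the vertex set `S`, from `x` to `y`. -/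
structure IsHamPath (E : V → V → Prop) (S : Set V) (x y : V) (l : List V) : Prop where
  isChain : l.IsChain E
  nodup : l.Nodup
  mem_iff : ∀ z, z ∈ l ↔ z ∈ S
  head?_eq : l.head? = some x
  getLast?_eq : l.getLast? = some y

/-- The `k` consecutive entries of the cyclic sequence `f` starting at position `i`. -/
def arc {N : ℕ} (f : ZMod N → V) (i : ZMod N) (k : ℕ) : List V :=
  (List.range k).map fun j : ℕ => f (i + j)

variable {E : V → V → Prop} {S T : Set V} {N : ℕ} {x y z : V}

theorem pushAt_iff_of_ne {v₀ u v : V} (hu : u ≠ v₀) (hv : v ≠ v₀) :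
    pushAt E v₀ u v ↔ E u v := by
  simp [pushAt, hu, hv]

theorem hamOn_iff_exists_isHamCycle : HamOn E S N ↔ ∃ f : ZMod N → V, IsHamCycle E S f :=
  ⟨fun ⟨f, hinj, hrange, hedge⟩ => ⟨f, hinj, hrange, hedge⟩,
    fun ⟨f, hf⟩ => ⟨f, hf.injective, hf.range_eq, hf.edge⟩⟩

theorem HamOn.image {W : Type} {E' : W → W → Prop} {φ : V → W} (h : HamOn E S N)
    (hφ : Function.Injective φ) (hE : ∀ u v, E u v → E' (φ u) (φ v)) : HamOn E' (φ '' S) N := by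
  obtain ⟨f, hinj, rfl, hedge⟩ := h
  exact ⟨φ ∘ f, hφ.comp hinj, Set.range_comp φ f, fun i => hE _ _ (hedge i)⟩

theorem hamOn_deleteVerts_compl : HamOn (deleteVerts E S) Sᶜ N ↔ HamOn E Sᶜ N := by
  constructor
  · rintro ⟨f, hinj, hrange, hedge⟩
    exact ⟨f, hinj, hrange, fun i => (hedge i).1⟩
  · rintro ⟨f, hinj, hrange, hedge⟩
    have not_mem (i) : f i ∉ S := hrange.subset (Set.mem_range_self i)
    exact ⟨f, hinj, hrange, fun i => ⟨hedge i, not_mem i, not_mem (i + 1)⟩⟩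

theorem length_arc (f : ZMod N → V) (i : ZMod N) (k : ℕ) : (arc f i k).length = k := by
  simp [arc]

theorem arc_add (f : ZMod N → V) (i : ZMod N) (k l : ℕ) :
    arc f i (k + l) = arc f i k ++ arc f (i + k) l := by
  simp [arc, List.range_add, add_assoc]

theorem getLast?_arc_succ (f : ZMod N → V) (i : ZMod N) (k : ℕ) :
    (arc f i (k + 1)).getLast? = some (f (i + k)) := by
  simp [arc, List.range_succ]

namespace IsHamCycle

variable {f : ZMod N → V} {i : ZMod N}

theorem exists_apply_eq (hf : IsHamCycle E S f) (hx : x ∈ S) : ∃ i, f i = x :=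
  hf.range_eq.symm.subset hx

theorem mem (hf : IsHamCycle E S f) (i : ZMod N) : f i ∈ S :=
  hf.range_eq.subset (Set.mem_range_self i)

theorem edge_sub_one (hf : IsHamCycle E S f) (i : ZMod N) : E (f (i - 1)) (f i) := by
  simpa only [sub_add_cancel] using hf.edge (i - 1)

theorem apply_add_one_eq (hf : IsHamCycle E S f) (hz : z ∈ S) (hin : ∀ y ∈ S, E y z → y = f i) :
    f (i + 1) = z := by
  obtain ⟨j, rfl⟩ := hf.exists_apply_eq hz
  have hij : j - 1 = i := hf.injective (hin _ (hf.mem _) (hf.edge_sub_one j))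
  rw [← hij, sub_add_cancel]

theorem apply_sub_one_eq (hf : IsHamCycle E S f) (hz : z ∈ S) (hout : ∀ y ∈ S, E z y → y = f i) :
    f (i - 1) = z := by
  obtain ⟨j, rfl⟩ := hf.exists_apply_eq hz
  have hij : j + 1 = i := hf.injective (hout _ (hf.mem _) (hf.edge j))
  rw [← hij, add_sub_cancel_right]

theorem nodup_arc (hf : IsHamCycle E S f) (i : ZMod N) : (arc f i N).Nodup := by
  refine List.nodup_range.map_on fun j hj k hk hjk => ?_
  have hcast : (j : ZMod N) = k := add_left_cancel (hf.injective hjk)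
  rwa [ZMod.natCast_eq_natCast_iff', Nat.mod_eq_of_lt (List.mem_range.1 hj),
    Nat.mod_eq_of_lt (List.mem_range.1 hk)] at hcast

theorem isChain_arc (hf : IsHamCycle E S f) (i : ZMod N) (k : ℕ) : (arc f i k).IsChain E := by
  rw [arc, List.isChain_map, List.isChain_range]
  intro j _
  simpa only [Nat.succ_eq_add_one, Nat.cast_succ, add_assoc] using hf.edge (i + j)

theorem mem_arc_iff [NeZero N] (hf : IsHamCycle E S f) (i : ZMod N) :
    z ∈ arc f i N ↔ z ∈ S := by
  rw [← hf.range_eq, arc, List.mem_map]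
  constructor
  · rintro ⟨j, -, rfl⟩
    exact Set.mem_range_self _
  · rintro ⟨j, rfl⟩
    exact ⟨(j - i).val, List.mem_range.2 (ZMod.val_lt _), by simp⟩

theorem isHamPath_arc [NeZero N] (hf : IsHamCycle E S f) (i : ZMod N) :
    IsHamPath E S (f i) (f (i - 1)) (arc f i N) where
  isChain := hf.isChain_arc i N
  nodup := hf.nodup_arc i
  mem_iff _ := hf.mem_arc_iff i
  head?_eq := by simp [arc, List.head?_range, NeZero.ne N]
  getLast?_eq := by
    obtain ⟨k, rfl⟩ := Nat.exists_eq_succ_of_ne_zero (NeZero.ne N)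
    have hk : (k : ZMod (k + 1)) = -1 :=
      eq_neg_of_add_eq_zero_left (mod_cast ZMod.natCast_self (k + 1))
    rw [getLast?_arc_succ, hk, sub_eq_add_neg]

end IsHamCycle

namespace IsHamPath

variable {l q : List V}

theorem mono {E' : V → V → Prop} (h : IsHamPath E S x y l)
    (hE : ∀ u ∈ S, ∀ v ∈ S, E u v → E' u v) : IsHamPath E' S x y l :=
  { h with
    isChain := h.isChain.imp_of_mem_imp fun u v hu hv =>
      hE u ((h.mem_iff u).1 hu) v ((h.mem_iff v).1 hv) }

theorem append {x' y' : V} (hl : IsHamPath E S x y l) (hq : IsHamPath E T x' y' q)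
    (hST : Disjoint S T) (hE : E y x') : IsHamPath E (S ∪ T) x y' (l ++ q) where
  isChain := by
    refine List.isChain_append.2 ⟨hl.isChain, hq.isChain, ?_⟩
    simpa [hl.getLast?_eq, hq.head?_eq] using hE
  nodup := by
    refine hl.nodup.append hq.nodup fun z hzl hzq => ?_
    exact hST.notMem_of_mem_left ((hl.mem_iff z).1 hzl) ((hq.mem_iff z).1 hzq)
  mem_iff z := by rw [List.mem_append, hl.mem_iff, hq.mem_iff, Set.mem_union]
  head?_eq := by simp [hl.head?_eq]
  getLast?_eq := by simp [hq.getLast?_eq]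

theorem of_append (h : IsHamPath E S x z (l ++ q)) (hq : ∀ u, u ∈ q ↔ u ∈ T)
    (hy : l.getLast? = some y) : IsHamPath E (S \ T) x y l where
  isChain := h.isChain.left_of_append
  nodup := h.nodup.of_append_left
  mem_iff u := by
    have hdisj : u ∈ l → u ∉ q := fun hul huq => h.nodup.disjoint hul huq
    rw [Set.mem_sdiff, ← hq, ← h.mem_iff, List.mem_append]
    tauto
  head?_eq := by
    have hl : l ≠ [] := by rintro rfl; simp at hy
    rw [← h.head?_eq, List.head?_append_of_ne_nil _ hl]
  getLast?_eq := hy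

theorem hamOn (h : IsHamPath E S x y l) (hE : E y x) : HamOn E S l.length := by
  have hl : l ≠ [] := by rintro rfl; simpa using h.head?_eq
  have : NeZero l.length := ⟨mt List.eq_nil_of_length_eq_zero hl⟩
  have hpos : 0 < l.length := Nat.pos_of_neZero _
  have first : l[0] = x := by
    simpa [List.head?_eq_getElem?, List.getElem?_eq_getElem hpos] using h.head?_eq
  have last (j : ℕ) (hj : j + 1 = l.length) : l[j] = y := by
    simpa [List.getLast?_eq_getElem?, ← hj] using h.getLast?_eq
  have val_add_one (i : ZMod l.length) : (i + 1).val = (i.val + 1) % l.length := by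
    rw [← ZMod.val_natCast, Nat.cast_succ, ZMod.natCast_zmod_val]
  refine ⟨fun i => l[i.val]'i.val_lt, fun i j hij => ?_, ?_, fun i => ?_⟩
  · exact ZMod.val_injective _ (h.nodup.getElem_inj_iff.1 hij)
  · ext z
    rw [← h.mem_iff, List.mem_iff_getElem]
    constructor
    · rintro ⟨i, rfl⟩
      exact ⟨i.val, i.val_lt, rfl⟩
    · rintro ⟨j, hj, rfl⟩
      exact ⟨j, by simp only [ZMod.val_natCast_of_lt hj]⟩
  · rcases (Nat.add_one_le_iff.2 i.val_lt).lt_or_eq with hi | hi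
    · simpa only [val_add_one, Nat.mod_eq_of_lt hi] using h.isChain.getElem i.val hi
    · simpa only [val_add_one, hi, Nat.mod_self, first, last i.val hi] using hE

end IsHamPath

end Digraph

section Cayley

variable {G : Type} [AddCommGroup G] {a b : G}

/-- The Cayley digraph of `G` with generators `a` and `b`. For `G = ZMod m × ZMod n`, `a = (1, 0)`
and `b = (0, 1)` this is `cpEdge m n`. -/
def cayleyEdge (a b u v : G) : Prop :=
  v = u + a ∨ v = u + b

/-- The translate by `w` of the unit square spanned by the generators, generalizing `R22`. -/
def unitSquare (a b w : G) : Set G :=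
  {w, w + a, w + b, w + a + b}

/-- The nine vertices of a `3 × 3` window of the Cayley digraph are distinct. -/
def GridInjective (a b : G) : Prop :=
  Function.Injective fun p : Fin 3 × Fin 3 => (p.1 : ℕ) • a + (p.2 : ℕ) • b

theorem cayleyEdge_comm (a b : G) : cayleyEdge a b = cayleyEdge b a :=
  funext₂ fun _ _ => propext or_comm

theorem unitSquare_comm (a b w : G) : unitSquare a b w = unitSquare b a w := by
  rw [unitSquare, unitSquare, add_right_comm, Set.insert_comm (w + a)]

theorem cayleyEdge_add_right {u v : G} (h : cayleyEdge a b u v) (t : G) :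
    cayleyEdge a b (u + t) (v + t) :=
  h.imp (by rintro rfl; exact add_right_comm _ _ _) (by rintro rfl; exact add_right_comm _ _ _)

theorem image_add_right_unitSquare (a b w t : G) :
    (· + t) '' unitSquare a b w = unitSquare a b (w + t) := by
  simp only [unitSquare, Set.image_insert_eq, Set.image_singleton, add_right_comm _ _ t]

theorem HamOn.compl_unitSquare {w : G} {N : ℕ}
    (h : HamOn (cayleyEdge a b) (unitSquare a b w)ᶜ N) (w' : G) :
    HamOn (cayleyEdge a b) (unitSquare a b w')ᶜ N := by
  have himage : (· + (w' - w)) '' (unitSquare a b w)ᶜ = (unitSquare a b w')ᶜ := by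
    rw [Set.image_compl_eq (AddGroup.addRight_bijective _), image_add_right_unitSquare,
      add_sub_cancel]
  exact himage ▸ h.image (add_left_injective _) fun _ _ huv => cayleyEdge_add_right huv _

namespace GridInjective

theorem symm (h : GridInjective a b) : GridInjective b a := fun p q hpq =>
  Prod.swap_injective <| h <| by
    simpa only [Prod.fst_swap, Prod.snd_swap, add_comm] using hpq

theorem nsmul_add_nsmul_ne (h : GridInjective a b) (i j k l : Fin 3) (hne : (i, j) ≠ (k, l)) :
    (i : ℕ) • a + (j : ℕ) • b ≠ (k : ℕ) • a + (l : ℕ) • b :=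
  h.ne hne

theorem nondegenerate (h : GridInjective a b) :
    a ≠ 0 ∧ a ≠ b ∧ a + a ≠ 0 ∧ a + b ≠ 0 ∧ a + b + b ≠ 0 ∧ a ≠ b + b := by
  refine ⟨?_, ?_, ?_, ?_, ?_, ?_⟩
  · simpa using h.nsmul_add_nsmul_ne 1 0 0 0 (by decide)
  · simpa using h.nsmul_add_nsmul_ne 1 0 0 1 (by decide)
  · simpa [two_nsmul] using h.nsmul_add_nsmul_ne 2 0 0 0 (by decide)
  · simpa using h.nsmul_add_nsmul_ne 1 1 0 0 (by decide)
  · simpa [two_nsmul, add_assoc] using h.nsmul_add_nsmul_ne 1 2 0 0 (by decide)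
  · simpa [two_nsmul] using h.nsmul_add_nsmul_ne 1 0 0 2 (by decide)

end GridInjective

theorem gridInjective_zmod {m n : ℕ} (hm : 3 ≤ m) (hn : 3 ≤ n) :
    GridInjective ((1, 0) : ZMod m × ZMod n) (0, 1) := by
  have natCast_inj {k : ℕ} (hk : 3 ≤ k) (i j : Fin 3) (hij : (i : ZMod k) = (j : ZMod k)) :
      i = j := by
    rw [ZMod.natCast_eq_natCast_iff', Nat.mod_eq_of_lt (by omega), Nat.mod_eq_of_lt (by omega)]
      at hij
    exact Fin.ext hij
  rintro ⟨i, j⟩ ⟨k, l⟩ h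
  simp only [Prod.smul_mk, Prod.mk_add_mk, nsmul_eq_mul, mul_one, mul_zero, add_zero, zero_add,
    Prod.mk.injEq] at h
  exact Prod.ext (natCast_inj hm _ _ h.1) (natCast_inj hn _ _ h.2)

variable {c y : G} {N : ℕ}

theorem eq_of_pushAt_from_center (h : pushAt (cayleyEdge a b) (c + a + b) (c + a + b) y) :
    y = c + a ∨ y = c + b := by
  simp only [pushAt, cayleyEdge] at h
  grind

theorem eq_of_pushAt_to_center (h : pushAt (cayleyEdge a b) (c + a + b) y (c + a + b)) :
    y = c + a + a + b ∨ y = c + a + b + b := by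
  simp only [pushAt, cayleyEdge] at h
  grind

theorem eq_of_pushAt_from_below (hab : GridInjective a b)
    (h : pushAt (cayleyEdge a b) (c + a + b) (c + a) y) : y = c + a + a := by
  have := hab.nondegenerate
  have := hab.symm.nondegenerate
  simp only [pushAt, cayleyEdge] at h
  grind

theorem eq_of_pushAt_to_right (hab : GridInjective a b)
    (h : pushAt (cayleyEdge a b) (c + a + b) y (c + a + a + b)) : y = c + a + a := by
  have := hab.nondegenerate
  have := hab.symm.nondegenerate
  simp only [pushAt, cayleyEdge] at h
  grind

theorem eq_of_pushAt_from_left (hab : GridInjective a b)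
    (h : pushAt (cayleyEdge a b) (c + a + b) (c + b) y) : y = c + b + b := by
  rw [cayleyEdge_comm, add_right_comm] at h
  exact eq_of_pushAt_from_below hab.symm h

theorem eq_of_pushAt_to_above (hab : GridInjective a b)
    (h : pushAt (cayleyEdge a b) (c + a + b) y (c + a + b + b)) : y = c + b + b := by
  rw [cayleyEdge_comm, add_right_comm c a b, add_right_comm (c + b) a b] at h
  exact eq_of_pushAt_to_right hab.symm h

theorem eq_of_pushAt_from_corner (hab : GridInjective a b)
    (h : pushAt (cayleyEdge a b) (c + a + b) c y) : y = c + a ∨ y = c + b := by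
  have := hab.nondegenerate
  have := hab.symm.nondegenerate
  simp only [pushAt, cayleyEdge] at h
  grind

/-- The way around the centre of the window through the square at `c + b`, which closes a path from
`c + a` to `c` up to a cycle of the pushed digraph. -/
def detour (a b c : G) : List G :=
  [c + b, c + b + b, c + a + b + b, c + a + b]

theorem mem_detour_iff : y ∈ detour a b c ↔ y ∈ unitSquare a b (c + b) := by
  simp only [detour, unitSquare, List.mem_cons, List.not_mem_nil, or_false, Set.mem_insert_iff,
    Set.mem_singleton_iff]
  grind

theorem center_mem_unitSquare (a b c : G) : c + a + b ∈ unitSquare a b (c + b) := by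
  simp [unitSquare, add_right_comm]

namespace IsHamCycle

variable {f : ZMod N → G} {i : ZMod N}

theorem apply_sub_one_center (hf : IsHamCycle (pushAt (cayleyEdge a b) (c + a + b)) Set.univ f)
    (hab : GridInjective a b) (hN : 4 < N) (hcenter : f i = c + a + b)
    (hbelow : f (i + 1) = c + a) : f (i - 1) = c + a + b + b := by
  have corner : f (i + 1 + 1) = c + a + a :=
    eq_of_pushAt_from_below hab (hbelow ▸ hf.edge (i + 1))
  have right : f (i + 1 + 1 + 1) = c + a + a + b :=
    hf.apply_add_one_eq (Set.mem_univ _) fun y _ hy => corner ▸ eq_of_pushAt_to_right hab hy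
  refine (eq_of_pushAt_to_center (hcenter ▸ hf.edge_sub_one i)).resolve_left fun hright => ?_
  have hclosed : i - 1 = i + 1 + 1 + 1 := hf.injective (hright.trans right.symm)
  have hfour : ((4 : ℕ) : ZMod N) = 0 := by push_cast; linear_combination -hclosed
  exact absurd (Nat.le_of_dvd four_pos ((ZMod.natCast_eq_zero_iff 4 N).1 hfour)) hN.not_ge

theorem arc_before_center (hf : IsHamCycle (pushAt (cayleyEdge a b) (c + a + b)) Set.univ f)
    (hab : GridInjective a b) (hN : 4 < N) (hcenter : f i = c + a + b)
    (hbelow : f (i + 1) = c + a) : f (i - 4) = c ∧ arc f (i - 3) 4 = detour a b c := by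
  have above := hf.apply_sub_one_center hab hN hcenter hbelow
  have aboveLeft : f (i - 1 - 1) = c + b + b :=
    eq_of_pushAt_to_above hab (above ▸ hf.edge_sub_one (i - 1))
  have left : f (i - 1 - 1 - 1) = c + b :=
    hf.apply_sub_one_eq (Set.mem_univ _) fun y _ hy => aboveLeft ▸ eq_of_pushAt_from_left hab hy
  have corner : f (i - 1 - 1 - 1 - 1) = c := by
    obtain ⟨j, hj⟩ := hf.exists_apply_eq (Set.mem_univ c)
    have hnext : f (j + 1) = f (i - 1 - 1 - 1) := by
      refine left ▸ (eq_of_pushAt_from_corner hab (hj ▸ hf.edge j)).resolve_left fun hbelow' => ?_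
      have hji : j = i := add_right_cancel (hf.injective (hbelow'.trans hbelow.symm))
      obtain ⟨-, -, -, add_ne_zero, -⟩ := hab.nondegenerate
      refine add_ne_zero ?_
      rwa [← hji, hj, add_assoc, left_eq_add] at hcenter
    rw [← hj, ← hf.injective hnext, add_sub_cancel_right]
  have arc_eq : arc f (i - 3) 4 = [f (i - 1 - 1 - 1), f (i - 1 - 1), f (i - 1), f i] := by
    simp only [arc, List.range_succ, List.range_zero, List.nil_append, List.cons_append,
      List.map_cons, List.map_nil]
    push_cast
    ring_nf
  refine ⟨?_, by rw [arc_eq, left, aboveLeft, above, hcenter, detour]⟩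
  rw [← corner]
  ring_nf

end IsHamCycle

theorem isHamPath_compl_unitSquare_iff {x : G} {l : List G} :
    IsHamPath (pushAt (cayleyEdge a b) (c + a + b)) (unitSquare a b (c + b))ᶜ x y l ↔
      IsHamPath (cayleyEdge a b) (unitSquare a b (c + b))ᶜ x y l := by
  have ne_center (u) (hu : u ∈ (unitSquare a b (c + b))ᶜ) : u ≠ c + a + b := by
    rintro rfl
    exact hu (center_mem_unitSquare a b c)
  exact ⟨fun h => h.mono fun u hu v hv => (pushAt_iff_of_ne (ne_center u hu) (ne_center v hv)).1,
    fun h => h.mono fun u hu v hv => (pushAt_iff_of_ne (ne_center u hu) (ne_center v hv)).2⟩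

theorem isHamPath_detour (hab : GridInjective a b) :
    IsHamPath (pushAt (cayleyEdge a b) (c + a + b)) (unitSquare a b (c + b)) (c + b) (c + a + b)
      (detour a b c) where
  isChain := by
    have := hab.nondegenerate
    have := hab.symm.nondegenerate
    simp only [detour, List.isChain_cons_cons, List.isChain_singleton, pushAt, cayleyEdge]
    grind
  nodup := by
    have := hab.nondegenerate
    have := hab.symm.nondegenerate
    simp only [detour, List.nodup_cons, List.mem_cons, List.not_mem_nil, List.nodup_nil]
    grind
  mem_iff _ := mem_detour_iff
  head?_eq := rfl
  getLast?_eq := rfl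

theorem IsHamPath.hamOn_pushAt {l : List G} (hab : GridInjective a b)
    (h : IsHamPath (cayleyEdge a b) (unitSquare a b (c + b))ᶜ (c + a) c l) :
    HamOn (pushAt (cayleyEdge a b) (c + a + b)) Set.univ (l.length + 4) := by
  have := hab.nondegenerate
  have := hab.symm.nondegenerate
  have enter : pushAt (cayleyEdge a b) (c + a + b) c (c + b) :=
    (pushAt_iff_of_ne (by grind) (by grind)).2 (Or.inr rfl)
  have leave : pushAt (cayleyEdge a b) (c + a + b) (c + a + b) (c + a) :=
    Or.inr ⟨Or.inr rfl, Or.inl rfl⟩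
  have path := (isHamPath_compl_unitSquare_iff.2 h).append (isHamPath_detour hab)
    disjoint_compl_left enter
  rw [Set.compl_union_self] at path
  simpa [detour] using path.hamOn leave

theorem hamOn_compl_unitSquare_iff (hab : GridInjective a b) (hN : N ≠ 0) (c : G) :
    HamOn (cayleyEdge a b) (unitSquare a b (c + b))ᶜ N ↔
      ∃ l, l.length = N ∧
        IsHamPath (cayleyEdge a b) (unitSquare a b (c + b))ᶜ (c + a) c l := by
  constructor
  · intro h
    obtain ⟨f, hf⟩ := hamOn_iff_exists_isHamCycle.1 h
    have := NeZero.mk hN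
    have corner_mem : c ∈ (unitSquare a b (c + b))ᶜ := by
      have := hab.nondegenerate
      have := hab.symm.nondegenerate
      simp only [unitSquare, Set.mem_compl_iff, Set.mem_insert_iff, Set.mem_singleton_iff]
      grind
    obtain ⟨i, hcorner⟩ := hf.exists_apply_eq corner_mem
    have hbelow : f (i + 1) = c + a := by
      refine (hcorner ▸ hf.edge i).resolve_right fun hleft => hf.mem (i + 1) ?_
      exact hleft ▸ Set.mem_insert _ _
    have path := hf.isHamPath_arc (i + 1)
    rw [hbelow, add_sub_cancel_right, hcorner] at path
    exact ⟨_, length_arc f (i + 1) N, path⟩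
  · rintro ⟨l, rfl, hl⟩
    exact hl.hamOn (Or.inl rfl)

theorem IsHamCycle.exists_isHamPath {f : ZMod N → G} {i : ZMod N}
    (hf : IsHamCycle (pushAt (cayleyEdge a b) (c + a + b)) Set.univ f)
    (hab : GridInjective a b) (hN : 4 < N) (hcenter : f i = c + a + b)
    (hbelow : f (i + 1) = c + a) :
    ∃ l, l.length = N - 4 ∧
      IsHamPath (cayleyEdge a b) (unitSquare a b (c + b))ᶜ (c + a) c l := by
  obtain ⟨corner, arc_eq⟩ := hf.arc_before_center hab hN hcenter hbelow
  obtain ⟨k, rfl⟩ : ∃ k, N = k + 1 + 4 := ⟨N - 5, by omega⟩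
  have hk : (k : ZMod (k + 1 + 4)) = -5 := by
    have hcast := ZMod.natCast_self (k + 1 + 4)
    push_cast at hcast
    linear_combination hcast
  have hstart : i + 1 + (k + 1 : ℕ) = i - 3 := by push_cast; linear_combination hk
  have hend : i + 1 + (k : ZMod (k + 1 + 4)) = i - 4 := by linear_combination hk
  have path := hf.isHamPath_arc (i + 1)
  rw [arc_add, hstart, arc_eq, hbelow] at path
  refine ⟨arc f (i + 1) (k + 1), length_arc _ _ _, ?_⟩
  rw [← isHamPath_compl_unitSquare_iff, Set.compl_eq_univ_sdiff]
  refine path.of_append (fun _ => mem_detour_iff) ?_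
  rw [getLast?_arc_succ, hend, corner]

theorem IsHamCycle.hamOn_compl_unitSquare {f : ZMod N → G} {i : ZMod N}
    (hf : IsHamCycle (pushAt (cayleyEdge a b) (c + a + b)) Set.univ f)
    (hab : GridInjective a b) (hN : 4 < N) (hcenter : f i = c + a + b)
    (hbelow : f (i + 1) = c + a) :
    HamOn (cayleyEdge a b) (unitSquare a b (c + b))ᶜ (N - 4) :=
  (hamOn_compl_unitSquare_iff hab (Nat.sub_ne_zero_of_lt hN) c).2
    (hf.exists_isHamPath hab hN hcenter hbelow)

theorem stmt_17_general (hab : GridInjective a b) (hN : 4 < N) (v w : G) :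
    HamOn (pushAt (cayleyEdge a b) v) Set.univ N ↔
      HamOn (deleteVerts (cayleyEdge a b) (unitSquare a b w)) (unitSquare a b w)ᶜ (N - 4) := by
  rw [hamOn_deleteVerts_compl]
  obtain ⟨c, rfl⟩ : ∃ c, v = c + a + b := ⟨v - b - a, by rw [sub_add_cancel, sub_add_cancel]⟩
  constructor
  · rw [hamOn_iff_exists_isHamCycle]
    rintro ⟨f, hf⟩
    obtain ⟨i, hcenter⟩ := hf.exists_apply_eq (Set.mem_univ (c + a + b))
    rcases eq_of_pushAt_from_center (hcenter ▸ hf.edge i) with hbelow | hleft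
    · exact (hf.hamOn_compl_unitSquare hab hN hcenter hbelow).compl_unitSquare w
    · rw [cayleyEdge_comm, add_right_comm] at hf
      rw [add_right_comm] at hcenter
      rw [cayleyEdge_comm, unitSquare_comm]
      exact (hf.hamOn_compl_unitSquare hab.symm hN hcenter hleft).compl_unitSquare w
  · intro h
    obtain ⟨l, hl, path⟩ := (hamOn_compl_unitSquare_iff hab (Nat.sub_ne_zero_of_lt hN) c).1
      (h.compl_unitSquare (c + b))
    have hlength : l.length + 4 = N := by rw [hl, Nat.sub_add_cancel hN.le]
    exact hlength ▸ path.hamOn_pushAt hab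

end Cayley

theorem R22_eq_unitSquare (m n : ℕ) : R22 m n = unitSquare (1, 0) (0, 1) 0 := by
  ext ⟨x, y⟩
  simp only [R22, unitSquare, Set.mem_ofPred_eq, Set.mem_insert_iff, Set.mem_singleton_iff,
    zero_add, Prod.mk_add_mk, add_zero, Prod.mk.injEq, Prod.mk_eq_zero]
  tauto

/-- For `m, n ≥ 3`, the pushed digraph `P(C⃗_m □ C⃗_n)` (pushing at `(1,1)`) is
hamiltonian iff `(C⃗_m □ C⃗_n) ∖ R_{2,2}` is hamiltonian. -/
theorem stmt_17 (m n : ℕ) (hm : 3 ≤ m) (hn : 3 ≤ n) :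
    HamOn (pushedEdge m n (1, 1)) Set.univ (m * n) ↔
      HamOn (fun u v => cpEdge m n u v ∧ u ∉ R22 m n ∧ v ∉ R22 m n)
        (R22 m n)ᶜ (m * n - 4) := by
  rw [R22_eq_unitSquare]
  exact stmt_17_general (gridInjective_zmod hm hn) (by nlinarith) (1, 1) 0
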